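/- Deterministic case structure of unbiased MAD: for every item i ∈ ∪_{u ∈ I} S_u, if w_init(i) ≤ τ then w(i) ≥ w_basic(i), and if w_init(i) > τ then w(i) ≥ τ. -/

import Mathlib

/-!
The final weight `w(i)` is the truncated weight plus three further terms: the rerouted weight, the
adaptive bias corrections `1/√|S_u| - 1/|S_u|`, and the weights of the non-adaptive users.

The rerouted weight is nonnegative (`wReroute_nonneg`), because the excess fractions are
nonnegative and `d_max ≥ 4` forces `α ≥ 0`. If `w_init(i) ≤ τ`, nothing is truncated, so the `1/|S_u|`
in the initial weight cancel against the bias corrections, and what remains besides the rerouted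
weight is exactly `w_basic(i)`. If `w_init(i) > τ`, the truncated weight is `τ`, and the bias
corrections are nonnegative since `√n ≤ n` for natural `n` (`one_div_card_le`).
-/

open Finset

/-- The set of adaptive users: those `u ∈ I` with `⌈1/b_min²⌉ ≤ |S_u| ≤ d_max`. -/
noncomputable def adaptSet {ι A : Type*} (I : Finset ι) (S : ι → Finset A)
    (bmin dmax : ℝ) : Finset ι :=
  I.filter (fun u => ⌈1 / bmin ^ 2⌉₊ ≤ (S u).card ∧ ((S u).card : ℝ) ≤ dmax)

/-- Initial weights: `w_init(i) = Σ_{u ∈ I_adapt, i ∈ S_u} 1/|S_u|`. -/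
noncomputable def wInit {ι A : Type*} [DecidableEq A] (I : Finset ι) (S : ι → Finset A)
    (bmin dmax : ℝ) (i : A) : ℝ :=
  ∑ u ∈ (adaptSet I S bmin dmax).filter (fun u => i ∈ S u), (1 : ℝ) / (S u).card

/-- Truncated weights: `w_trunc(i) = min{w_init(i), τ}`. -/
noncomputable def wTrunc {ι A : Type*} [DecidableEq A] (I : Finset ι) (S : ι → Finset A)
    (bmin dmax τ : ℝ) (i : A) : ℝ :=
  min (wInit I S bmin dmax i) τ

/-- Excess fraction: `r(i) = (w_init(i) − w_trunc(i))/w_init(i)` when `w_init(i) > 0`,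
and `0` otherwise. -/
noncomputable def rFrac {ι A : Type*} [DecidableEq A] (I : Finset ι) (S : ι → Finset A)
    (bmin dmax τ : ℝ) (i : A) : ℝ :=
  if 0 < wInit I S bmin dmax i then
    (wInit I S bmin dmax i - wTrunc I S bmin dmax τ i) / wInit I S bmin dmax i
  else 0

/-- Excess weight returned to a user: `e_u = (1/|S_u|)·Σ_{i ∈ S_u} r(i)`. -/
noncomputable def eUser {ι A : Type*} [DecidableEq A] (I : Finset ι) (S : ι → Finset A)
    (bmin dmax τ : ℝ) (u : ι) : ℝ :=
  (1 / ((S u).card : ℝ)) * ∑ i ∈ S u, rFrac I S bmin dmax τ i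

/-- Rerouted weights: `w_reroute(i) = Σ_{u ∈ I_adapt, i ∈ S_u} α·e_u/d_max`. -/
noncomputable def wReroute {ι A : Type*} [DecidableEq A] (I : Finset ι) (S : ι → Finset A)
    (bmin dmax τ α : ℝ) (i : A) : ℝ :=
  ∑ u ∈ (adaptSet I S bmin dmax).filter (fun u => i ∈ S u),
    α * eUser I S bmin dmax τ u / dmax

/-- Final MAD weight:
`w(i) = w_trunc(i) + w_reroute(i) + Σ_{u ∈ I_adapt, i ∈ S_u} (w_b^u(i) − 1/|S_u|)
      + Σ_{u ∈ I∖I_adapt, i ∈ S_u} w_b^u(i)`. -/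
noncomputable def wFinal {ι A : Type*} [DecidableEq ι] [DecidableEq A] (I : Finset ι)
    (S : ι → Finset A) (bmin dmax τ α : ℝ) (wb : ι → A → ℝ) (i : A) : ℝ :=
  wTrunc I S bmin dmax τ i + wReroute I S bmin dmax τ α i +
    (∑ u ∈ (adaptSet I S bmin dmax).filter (fun u => i ∈ S u),
      (wb u i - 1 / ((S u).card : ℝ))) +
    ∑ u ∈ (I \ adaptSet I S bmin dmax).filter (fun u => i ∈ S u), wb u i

/-- Basic weights: `w_basic(i) = Σ_{u ∈ I, i ∈ S_u} 1/√|S_u|`. -/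
noncomputable def wBasic {ι A : Type*} [DecidableEq A] (I : Finset ι) (S : ι → Finset A)
    (i : A) : ℝ :=
  ∑ u ∈ I.filter (fun u => i ∈ S u), 1 / Real.sqrt ((S u).card : ℝ)

lemma rFrac_nonneg {ι A : Type*} [DecidableEq A] (I : Finset ι) (S : ι → Finset A)
    (bmin dmax τ : ℝ) (i : A) : 0 ≤ rFrac I S bmin dmax τ i := by
  unfold rFrac
  split_ifs with h
  · exact div_nonneg (sub_nonneg.2 (min_le_left _ _)) h.le
  · exact le_rfl

lemma wReroute_nonneg {ι A : Type*} [DecidableEq A] (I : Finset ι) (S : ι → Finset A)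
    (bmin dmax τ α : ℝ) (hd : 0 ≤ dmax) (hα : 0 ≤ α) (i : A) :
    0 ≤ wReroute I S bmin dmax τ α i := by
  refine Finset.sum_nonneg fun u _ => div_nonneg (mul_nonneg hα ?_) hd
  exact mul_nonneg (by positivity) (Finset.sum_nonneg fun j _ => rFrac_nonneg I S bmin dmax τ j)

/-- An adaptive user's bias correction is nonnegative. For `n = 0` both sides are `0` by the
convention on division by zero. -/
lemma one_div_card_le (n : ℕ) : 1 / (n : ℝ) ≤ 1 / Real.sqrt n := by
  rcases Nat.eq_zero_or_pos n with rfl | hn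
  · simp
  · have h1 : (1 : ℝ) ≤ n := by exact_mod_cast hn
    have h0 : 0 < Real.sqrt n := Real.sqrt_pos.2 (by linarith)
    refine one_div_le_one_div_of_le h0 (Real.sqrt_le_iff.2 ⟨by linarith, ?_⟩)
    nlinarith

/-- **Deterministic case structure of unbiased MAD** (`b_min = 1`, per-user weights
`w_b^u(i) = 1/√|S_u|` on `S_u` and `0` elsewhere): for every item `i ∈ ∪_{u ∈ I} S_u`,
if `w_init(i) ≤ τ` then `w(i) ≥ w_basic(i)`, and if `w_init(i) > τ` then `w(i) ≥ τ`. -/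
theorem mad_unbiased_case_structure {ι A : Type*} [DecidableEq ι] [DecidableEq A]
    (I : Finset ι) (S : ι → Finset A)
    (hne : ∀ u ∈ I, (S u).Nonempty)
    (τ dmax α : ℝ)
    (hτ : 1 ≤ τ) (hdmax : 4 ≤ dmax)
    (hα : α = 1 - 1 / (2 * Real.sqrt dmax))
    (wb : ι → A → ℝ)
    (hwb : ∀ u i, wb u i = if i ∈ S u then 1 / Real.sqrt ((S u).card : ℝ) else 0) :
    ∀ i ∈ I.biUnion S,
      (wInit I S 1 dmax i ≤ τ →
        wBasic I S i ≤ wFinal I S 1 dmax τ α wb i) ∧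
      (τ < wInit I S 1 dmax i →
        τ ≤ wFinal I S 1 dmax τ α wb i) := by
  intro i _
  have hα0 : 0 ≤ α := by
    have h1 : (1 : ℝ) ≤ Real.sqrt dmax := Real.one_le_sqrt.2 (by linarith)
    have h2 : 1 / (2 * Real.sqrt dmax) ≤ 1 := by
      rw [div_le_one (by linarith)]
      linarith
    linarith
  have hR := wReroute_nonneg I S 1 dmax τ α (by linarith) hα0 i
  have hwb' : ∀ T : Finset ι, ∀ u ∈ T.filter (fun u => i ∈ S u),
      wb u i = 1 / Real.sqrt ((S u).card : ℝ) := fun T u hu => by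
    rw [hwb, if_pos (Finset.mem_filter.1 hu).2]
  constructor
  · intro h
    have hsub : adaptSet I S 1 dmax ⊆ I := Finset.filter_subset _ _
    have hT : wTrunc I S 1 dmax τ i = wInit I S 1 dmax i := min_eq_left h
    -- splitting the users into adaptive and non-adaptive ones
    have hB : wBasic I S i =
        (∑ u ∈ (adaptSet I S 1 dmax).filter (fun u => i ∈ S u), wb u i) +
        ∑ u ∈ (I \ adaptSet I S 1 dmax).filter (fun u => i ∈ S u), wb u i := by
      rw [wBasic, ← Finset.sum_congr rfl (hwb' I), Finset.sum_filter, Finset.sum_filter,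
        Finset.sum_filter, add_comm, Finset.sum_sdiff hsub]
    rw [wFinal, hT, hB, Finset.sum_sub_distrib, wInit]
    linarith
  · intro h
    have hT : wTrunc I S 1 dmax τ i = τ := min_eq_right h.le
    have hA : 0 ≤ ∑ u ∈ (adaptSet I S 1 dmax).filter (fun u => i ∈ S u),
        (wb u i - 1 / ((S u).card : ℝ)) :=
      Finset.sum_nonneg fun u hu => by
        rw [hwb' _ u hu]
        exact sub_nonneg.2 (one_div_card_le _)
    have hN : 0 ≤ ∑ u ∈ (I \ adaptSet I S 1 dmax).filter (fun u => i ∈ S u), wb u i :=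
      Finset.sum_nonneg fun u hu => by
        rw [hwb' _ u hu]
        positivity
    rw [wFinal, hT]
    linarith
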